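/- (Integral invariance) Let λ ∈ Λ_I⁺ (so Φ_I ⊆ Φ_{[λ]}) and β ∈ Ψ_λ⁺. Then there exists μ ∈ Λ_I⁺ with sgn(s_βλ, μ) ≠ 0 if and only if there exists μ' ∈ Λ⁺(Φ_I, Φ_{[λ]}) with sgn(s_β(λ|_{Φ_{[λ]}}), μ', Φ_I, Φ_{[λ]}) ≠ 0. In particular, if sgn(s_βλ, μ) ≠ 0, then μ' = μ|_{Φ_{[λ]}} and c(λ,μ) = c(λ|_{Φ_{[λ]}}, μ|_{Φ_{[λ]}}, Φ_I, Φ_{[λ]}). -/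

import Mathlib

open scoped RealInnerProductSpace
open Classical

noncomputable section

namespace JantzenGVM

variable {V : Type*} [NormedAddCommGroup V] [InnerProductSpace ℝ V] [FiniteDimensional ℝ V]

/-- The coroot `α^∨ = 2α/⟨α,α⟩` of a vector `α` (junk value `0` when `α = 0`). -/
def coroot (α : V) : V := (2 / ⟪α, α⟫) • α

/-- The linear functional `v ↦ ⟨v, α^∨⟩`. -/
def corootForm (α : V) : V →ₗ[ℝ] ℝ where
  toFun v := ⟪v, coroot α⟫
  map_add' x y := by simp [inner_add_left]
  map_smul' c x := by simp [inner_smul_left]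

lemma corootForm_self {α : V} (h : ⟪α, α⟫ ≠ 0) : corootForm α α = 2 := by
  simp only [corootForm, coroot, LinearMap.coe_mk, AddHom.coe_mk, real_inner_smul_right]
  field_simp

/-- The reflection `s_α` as a linear automorphism of `V` (the identity when `⟨α,α⟩ = 0`). -/
def reflV (α : V) : V ≃ₗ[ℝ] V :=
  if h : ⟪α, α⟫ = 0 then LinearEquiv.refl ℝ V
  else Module.reflection (corootForm_self h)

/-- `h* = ℂ ⊗ V`, realized as the space of real-linear functionals `V → ℂ` via the
inner product; an element `λ` pairs with a root `α` by `⟨λ, α⟩ = λ α` and with the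
coroot by `⟨λ, α^∨⟩ = λ (coroot α)`. -/
abbrev HStar (V : Type*) [NormedAddCommGroup V] [InnerProductSpace ℝ V] := V →ₗ[ℝ] ℂ

/-- The canonical embedding of `V` into `h*`. -/
def emb (α : V) : HStar V where
  toFun v := (⟪α, v⟫ : ℂ)
  map_add' x y := by simp [inner_add_right]
  map_smul' c x := by simp [inner_smul_right, Complex.real_smul]

/-- The action of a linear automorphism `w` of `V` on `h*`: `(w • λ)(v) = λ(w⁻¹ v)`. -/
def wAct (w : V ≃ₗ[ℝ] V) (l : HStar V) : HStar V := l ∘ₗ (w.symm : V →ₗ[ℝ] V)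

/-- The reflection `s_β λ = λ - ⟨λ, β^∨⟩ β` acting on `h*`. -/
def sRefl (β : V) (l : HStar V) : HStar V := l - l (coroot β) • emb β

/-- The group generated by the reflections in the elements of `Φ'`. -/
def weyl (Φ' : Set V) : Subgroup (V ≃ₗ[ℝ] V) :=
  Subgroup.closure {w | ∃ α ∈ Φ', w = reflV α}

/-- A finite, reduced, crystallographic root system spanning the Euclidean space `V`,
together with a choice of positive system and the corresponding simple system. -/
structure RootSys (V : Type*) [NormedAddCommGroup V] [InnerProductSpace ℝ V]
    [FiniteDimensional ℝ V] where
  Φ : Finset V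
  pos : Finset V
  Δ : Finset V
  ne_zero : ∀ α ∈ Φ, α ≠ (0 : V)
  span_eq_top : Submodule.span ℝ (Φ : Set V) = ⊤
  reduced : ∀ α ∈ Φ, ∀ c : ℝ, c • α ∈ Φ → c = 1 ∨ c = -1
  refl_mem : ∀ α ∈ Φ, ∀ β ∈ Φ, reflV α β ∈ Φ
  crystallographic : ∀ α ∈ Φ, ∀ β ∈ Φ, ∃ n : ℤ, ⟪β, coroot α⟫ = (n : ℝ)
  pos_subset : pos ⊆ Φ
  mem_pos_or : ∀ α ∈ Φ, α ∈ pos ∨ -α ∈ pos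
  not_both : ∀ α ∈ pos, -α ∉ pos
  simple_subset : Δ ⊆ pos
  simple_indep : LinearIndependent ℝ (fun x : {a : V // a ∈ Δ} => x.1)
  simple_gen : ∀ β ∈ pos, ∃ c : V → ℝ, (∀ α ∈ Δ, 0 ≤ c α) ∧ β = ∑ α ∈ Δ, c α • α

/-- A subsystem of the root system: a subset of `Φ` closed under its own reflections. -/
def IsSubsystem (S : RootSys V) (Φ' : Set V) : Prop :=
  Φ' ⊆ (S.Φ : Set V) ∧ ∀ α ∈ Φ', ∀ β ∈ Φ', reflV α β ∈ Φ'

/-- The length of `w`, i.e. the number of positive roots sent to negative roots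
(this equals the Coxeter length for elements of the Weyl group). -/
def len (S : RootSys V) (w : V ≃ₗ[ℝ] V) : ℕ :=
  {β ∈ (S.pos : Set V) | w β ∉ (S.pos : Set V)}.ncard

/-- `Φ_I = ℤI ∩ Φ`, the subsystem generated by a subset `I` of the simple roots. -/
def PhiI (S : RootSys V) (I : Finset V) : Set V :=
  {α ∈ (S.Φ : Set V) | α ∈ Submodule.span ℤ (I : Set V)}

/-- `z` is a positive integer. -/
def IsPosInt (z : ℂ) : Prop := ∃ n : ℤ, 0 < n ∧ z = (n : ℂ)

/-- `z` is an integer. -/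
def IsInt (z : ℂ) : Prop := ∃ n : ℤ, z = (n : ℂ)

/-- `Λ_I⁺ = {λ ∈ h* : ⟨λ, α^∨⟩ ∈ ℤ_{>0} for all α ∈ I}`. -/
def LambdaP (I : Set V) : Set (HStar V) :=
  {l | ∀ α ∈ I, IsPosInt (l (coroot α))}

/-- `Λ⁺(Φ'', Φ') = {ν ∈ ℂΦ' : ⟨ν, α^∨⟩ ∈ ℤ_{>0} for all α ∈ Φ'' ∩ Φ⁺}`. -/
def LambdaPSub (S : RootSys V) (Φ'' Φ' : Set V) : Set (HStar V) :=
  {l | l ∈ Submodule.span ℂ (emb '' Φ') ∧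
       ∀ α ∈ Φ'' ∩ (S.pos : Set V), IsPosInt (l (coroot α))}

/-- `λ` is `Φ''`-regular: `⟨λ, α⟩ ≠ 0` for all `α ∈ Φ''`. -/
def IsRegularOn (Φ'' : Set V) (l : HStar V) : Prop := ∀ α ∈ Φ'', l α ≠ 0

/-- `Ψ⁺(λ, Φ'', Φ') = {β ∈ (Φ' ∩ Φ⁺) \ Φ'' : ⟨λ, β^∨⟩ ∈ ℤ_{>0}}`. -/
def PsiP (S : RootSys V) (Φ'' Φ' : Set V) (l : HStar V) : Set V :=
  {β | β ∈ Φ' ∩ (S.pos : Set V) ∧ β ∉ Φ'' ∧ IsPosInt (l (coroot β))}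

/-- `Ψ⁺⁺(λ, Φ'', Φ') = {β ∈ Ψ⁺(λ, Φ'', Φ') : s_β λ is Φ''-regular}`. -/
def PsiPP (S : RootSys V) (Φ'' Φ' : Set V) (l : HStar V) : Set V :=
  {β ∈ PsiP S Φ'' Φ' l | ∀ α ∈ Φ'', (sRefl β l) α ≠ 0}

/-- The sign function: `sgn(λ, μ) = (-1)^{ℓ(w)}` if `λ, μ` are `Φ''`-regular and
`μ = wλ` for some `w ∈ W(Φ'')`, and `0` otherwise. -/
def sgnW (S : RootSys V) (Φ'' : Set V) (l m : HStar V) : ℤ :=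
  if h : IsRegularOn Φ'' l ∧ IsRegularOn Φ'' m ∧ ∃ w, w ∈ weyl Φ'' ∧ m = wAct w l
  then (-1) ^ len S h.2.2.choose else 0

/-- The Jantzen coefficient `c(λ, μ, Φ'', Φ') = Σ_{β ∈ Ψ⁺⁺(λ,Φ'',Φ')} sgn(s_β λ, μ)`. -/
def jc (S : RootSys V) (Φ'' Φ' : Set V) (l m : HStar V) : ℤ :=
  ∑ᶠ β ∈ PsiPP S Φ'' Φ' l, sgnW S Φ'' (sRefl β l) m

/-- The symmetrized Jantzen coefficient `c̃(λ, μ, Φ'', Φ')`. -/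
def jcSym (S : RootSys V) (Φ'' Φ' : Set V) (l m : HStar V) : ℤ :=
  jc S Φ'' Φ' l m + jc S Φ'' Φ' m l

/-- `θ(λ) = Σ_{w ∈ W_I} (-1)^{ℓ(w)} e^{wλ}` in the free `ℤ`-module on `h*`. -/
def theta (S : RootSys V) (I : Finset V) (l : HStar V) : HStar V →₀ ℤ :=
  ∑ᶠ w ∈ (weyl (PhiI S I) : Set (V ≃ₗ[ℝ] V)),
    Finsupp.single (wAct w l) ((-1) ^ len S w)

/-- `Φ_λ = {α ∈ Φ : ⟨λ, α⟩ = 0}`. -/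
def singSet (S : RootSys V) (l : HStar V) : Set V :=
  {α ∈ (S.Φ : Set V) | l α = 0}

/-- `Φ_{[λ]} = {α ∈ Φ : ⟨λ, α^∨⟩ ∈ ℤ}`. -/
def integralSet (S : RootSys V) (l : HStar V) : Set V :=
  {α ∈ (S.Φ : Set V) | IsInt (l (coroot α))}

/-- `(ℚ A) ∩ Φ`, the intersection of the rational span of `A` with `Φ`.
Taking `A = Φ_I ∪ {β}` gives `Φ_{β,1}`; taking `A = Φ_λ ∪ {β}` gives `Φ_{β,2}`. -/
def ratSpanRoots (S : RootSys V) (A : Set V) : Set V :=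
  {γ ∈ (S.Φ : Set V) | ∃ (t : Finset V) (c : V → ℚ),
    (t : Set V) ⊆ A ∧ γ = ∑ α ∈ t, (c α : ℝ) • α}

/-- `Φ_{β,0}`, the irreducible component of `Φ` containing `β`. -/
def component (S : RootSys V) (β : V) : Set V :=
  {γ ∈ (S.Φ : Set V) |
    Relation.ReflTransGen
      (fun x y => x ∈ (S.Φ : Set V) ∧ y ∈ (S.Φ : Set V) ∧ ⟪x, y⟫ ≠ 0) β γ}

/-- `λ|_{Φ'}`: the unique element of `ℂΦ'` with `⟨λ|_{Φ'}, α^∨⟩ = ⟨λ, α^∨⟩`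
for all `α ∈ Φ'`. -/
def restrictW (Φ' : Set V) (l : HStar V) : HStar V :=
  letI : Nonempty (HStar V) := ⟨0⟩
  Classical.epsilon fun m =>
    m ∈ Submodule.span ℂ (emb '' Φ') ∧ ∀ α ∈ Φ', m (coroot α) = l (coroot α)

/-- `ᴵWᴶ = {w ∈ W : ℓ(uwv) = ℓ(u) + ℓ(w) + ℓ(v) for all u ∈ W_I, v ∈ W_J}`. -/
def doubleCoset (S : RootSys V) (I J : Finset V) : Set (V ≃ₗ[ℝ] V) :=
  {w | w ∈ weyl (S.Φ : Set V) ∧ ∀ u ∈ weyl (PhiI S I), ∀ v ∈ weyl (PhiI S J),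
    len S (u * w * v) = len S u + len S w + len S v}

/-- The fundamental weight `ϖ_j` relative to an enumeration `e` of the simple roots:
the unique element of `h*` with `⟨ϖ_j, α_k^∨⟩ = δ_{jk}`. -/
def fundWeight {n : ℕ} (e : Fin n → V) (j : Fin n) : HStar V :=
  letI : Nonempty (HStar V) := ⟨0⟩
  Classical.epsilon fun m => ∀ k : Fin n, m (coroot (e k)) = if k = j then 1 else 0

/-- The labels of the irreducible Dynkin types. -/
inductive LieType | A | B | C | D | E | F | G
deriving DecidableEq

/-- The Cartan matrix of type `A_n` (1-based indices): entry `(i,j)` is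
`⟨α_i, α_j^∨⟩`. -/
def cartanA (i j : ℕ) : ℤ :=
  if i = j then 2 else if i + 1 = j ∨ j + 1 = i then -1 else 0

/-- The Cartan matrices of the irreducible types in the standard (Bourbaki/Humphreys)
numbering of the Dynkin diagram: `cartanEntry t n i j = ⟨α_i, α_j^∨⟩` (1-based). -/
def cartanEntry : LieType → ℕ → ℕ → ℕ → ℤ
  | .A, _, i, j => cartanA i j
  | .B, n, i, j => if i + 1 = n ∧ j = n then -2 else cartanA i j
  | .C, n, i, j => if i = n ∧ j + 1 = n then -2 else cartanA i j
  | .D, n, i, j =>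
      if i = j then 2
      else if (i + 2 = n ∧ j = n) ∨ (i = n ∧ j + 2 = n) then -1
      else if (i + 1 = n ∧ j = n) ∨ (i = n ∧ j + 1 = n) then 0
      else cartanA i j
  | .E, _, i, j =>
      if i = j then 2
      else if (i = 1 ∧ j = 3) ∨ (i = 3 ∧ j = 1) ∨ (i = 2 ∧ j = 4) ∨ (i = 4 ∧ j = 2) then -1
      else if (i = 1 ∧ j = 2) ∨ (i = 2 ∧ j = 1) ∨ (i = 2 ∧ j = 3) ∨ (i = 3 ∧ j = 2) then 0
      else cartanA i j
  | .F, _, i, j => if i = 2 ∧ j = 3 then -2 else cartanA i j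
  | .G, _, i, j => if i = 2 ∧ j = 1 then -3 else cartanA i j

/-- The standard basis vector `e_k` (1-based index, junk `0` outside `1 ≤ k ≤ n`). -/
def stdE (n k : ℕ) : EuclideanSpace ℝ (Fin n) :=
  if h : 1 ≤ k ∧ k ≤ n then EuclideanSpace.single ⟨k - 1, by omega⟩ 1 else 0

/-- The labels `B`, `C`, `D` of the classical non-`A` types. -/
inductive BCD | B | C | D
deriving DecidableEq

/-- The root set of `B_n` / `C_n` / `D_n` in the standard realization. -/
def bcdRoots (t : BCD) (n : ℕ) : Set (EuclideanSpace ℝ (Fin n)) :=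
  {v | (∃ i j : ℕ, 1 ≤ i ∧ i < j ∧ j ≤ n ∧
          (v = stdE n i - stdE n j ∨ v = -(stdE n i - stdE n j) ∨
           v = stdE n i + stdE n j ∨ v = -(stdE n i + stdE n j))) ∨
       (match t with
        | .B => ∃ i : ℕ, 1 ≤ i ∧ i ≤ n ∧ (v = stdE n i ∨ v = -stdE n i)
        | .C => ∃ i : ℕ, 1 ≤ i ∧ i ≤ n ∧ (v = (2:ℝ) • stdE n i ∨ v = -((2:ℝ) • stdE n i))
        | .D => False)}

/-- The positive roots of `B_n` / `C_n` / `D_n` in the standard realization. -/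
def bcdPos (t : BCD) (n : ℕ) : Set (EuclideanSpace ℝ (Fin n)) :=
  {v | (∃ i j : ℕ, 1 ≤ i ∧ i < j ∧ j ≤ n ∧
          (v = stdE n i - stdE n j ∨ v = stdE n i + stdE n j)) ∨
       (match t with
        | .B => ∃ i : ℕ, 1 ≤ i ∧ i ≤ n ∧ v = stdE n i
        | .C => ∃ i : ℕ, 1 ≤ i ∧ i ≤ n ∧ v = (2:ℝ) • stdE n i
        | .D => False)}

/-- The simple roots of `B_n` / `C_n` / `D_n` in the standard realization. -/
def bcdSimple (t : BCD) (n : ℕ) : Set (EuclideanSpace ℝ (Fin n)) :=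
  {v | (∃ i : ℕ, 1 ≤ i ∧ i < n ∧ v = stdE n i - stdE n (i + 1)) ∨
       (match t with
        | .B => v = stdE n n
        | .C => v = (2:ℝ) • stdE n n
        | .D => v = stdE n (n - 1) + stdE n n)}

/-- The simple root `α_k` of `B_n` / `C_n` / `D_n` (1-based index `k`). -/
def bcdAlpha (t : BCD) (n k : ℕ) : EuclideanSpace ℝ (Fin n) :=
  if k < n then stdE n k - stdE n (k + 1)
  else match t with
  | .B => stdE n n
  | .C => (2:ℝ) • stdE n n
  | .D => stdE n (n - 1) + stdE n n


section Aux

variable {V : Type*} [NormedAddCommGroup V] [InnerProductSpace ℝ V] [FiniteDimensional ℝ V]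

lemma aux_reflV_apply (α v : V) : reflV α v = v - ⟪v, coroot α⟫ • α := by
  unfold reflV
  split_ifs with h
  · have : α = 0 := by simpa using h
    simp [this]
  · simp [Module.reflection_apply, corootForm]

lemma aux_coroot_neg (α : V) : coroot (-α) = -coroot α := by
  simp [coroot]

lemma aux_dual (S : RootSys V) (g : V → ℝ) :
    ∃ f : V →ₗ[ℝ] ℝ, ∀ α ∈ S.Δ, f α = g α := by
  let b := Module.Basis.span S.simple_indep
  obtain ⟨f, hf⟩ := LinearMap.exists_extend (b.constr ℝ (fun x => g x.1))
  refine ⟨f, fun α hα => ?_⟩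
  have h1 : ((b ⟨α, hα⟩ : _) : V) = α := by
    simp [b, Module.Basis.span_apply]
  have h2 : (f ∘ₗ Submodule.subtype _) (b ⟨α, hα⟩) = g α := by
    rw [hf, Module.Basis.constr_basis]
  rw [← h2]
  simp [h1]

lemma aux_posInt (S : RootSys V) (I : Finset V) (hI : I ⊆ S.Δ) (l : HStar V)
    (hl : l ∈ LambdaP (I : Set V)) :
    ∀ γ ∈ PhiI S I, γ ∈ S.pos → IsPosInt (l (coroot γ)) := by
  by_contra hcon
  push Not at hcon
  obtain ⟨f, hf⟩ := aux_dual S (fun _ => 1)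
  let B : Finset V := S.pos.filter (fun γ => γ ∈ PhiI S I ∧ ¬ IsPosInt (l (coroot γ)))
  have hB : B.Nonempty := by
    obtain ⟨γ, h1, h2, h3⟩ := hcon
    exact ⟨γ, Finset.mem_filter.2 ⟨h2, h1, h3⟩⟩
  obtain ⟨γ, hγB, hmin⟩ := Finset.exists_min_image B f hB
  obtain ⟨hγp, ⟨hγΦ, hγI⟩, hγn⟩ := Finset.mem_filter.1 hγB
  obtain ⟨c, hc0, hc⟩ := S.simple_gen γ hγp
  have hγ0 : γ ≠ 0 := S.ne_zero γ hγΦ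
  have hγγ : 0 < ⟪γ, γ⟫ := real_inner_self_pos.2 hγ0
  -- coordinate functionals
  have hcoord : ∀ δ ∈ S.Δ, ∃ e : V →ₗ[ℝ] ℝ, ∀ α ∈ S.Δ, e α = if α = δ then 1 else 0 :=
    fun δ _ => aux_dual S (fun α => if α = δ then 1 else 0)
  have hsum : ∀ (c : V → ℝ) (δ : V), δ ∈ S.Δ → ∀ e : V →ₗ[ℝ] ℝ,
      (∀ α ∈ S.Δ, e α = if α = δ then 1 else 0) → e (∑ α ∈ S.Δ, c α • α) = c δ := by
    intro c δ hδ e he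
    rw [map_sum, Finset.sum_eq_single δ]
    · simp [he δ hδ]
    · intro b hb hne
      simp [he b hb, hne]
    · exact fun h => absurd hδ h
  have hsupp : ∀ δ ∈ S.Δ, δ ∉ I → c δ = 0 := by
    intro δ hδ hδI
    obtain ⟨e, he⟩ := hcoord δ hδ
    have h1 : e γ = c δ := by rw [hc]; exact hsum c δ hδ e he
    rw [← h1]
    refine Submodule.span_induction (p := fun x _ => e x = 0) ?_ (by simp) ?_ ?_ hγI
    · intro x hx
      have hx' : x ∈ I := hx
      rw [he x (hI hx'), if_neg]
      rintro rfl
      exact hδI hx'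
    · intro x y _ _ hx hy
      simp [hx, hy]
    · intro a x _ hx
      simp [hx]
  have hex : ∃ α ∈ S.Δ, 0 < c α * ⟪γ, α⟫ := by
    by_contra hno
    push Not at hno
    have : ⟪γ, γ⟫ = ∑ α ∈ S.Δ, c α * ⟪γ, α⟫ := by
      calc ⟪γ, γ⟫ = ⟪γ, ∑ α ∈ S.Δ, c α • α⟫ := by rw [← hc]
        _ = _ := by
          rw [inner_sum]
          exact Finset.sum_congr rfl fun α _ => real_inner_smul_right _ _ _
    have h2 := Finset.sum_nonpos hno
    linarith
  obtain ⟨α, hαΔ, hα⟩ := hex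
  have hαI : α ∈ I := by
    by_contra h
    simp [hsupp α hαΔ h] at hα
  have hip : 0 < ⟪γ, α⟫ := by
    by_contra h
    have := mul_nonpos_of_nonneg_of_nonpos (hc0 α hαΔ) (not_lt.1 h)
    linarith
  have hαp : α ∈ S.pos := S.simple_subset hαΔ
  have hαΦ : α ∈ S.Φ := S.pos_subset hαp
  have hαα : 0 < ⟪α, α⟫ := real_inner_self_pos.2 (S.ne_zero α hαΦ)
  have hne : γ ≠ α := by
    rintro rfl
    exact hγn (hl γ hαI)
  obtain ⟨n, hn⟩ := S.crystallographic α hαΦ γ hγΦ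
  obtain ⟨m, hm⟩ := S.crystallographic γ hγΦ α hαΦ
  have hn' : (n : ℝ) = 2 / ⟪α, α⟫ * ⟪γ, α⟫ := by
    rw [← hn, coroot, real_inner_smul_right]
  have hm' : (m : ℝ) = 2 / ⟪γ, γ⟫ * ⟪γ, α⟫ := by
    rw [← hm, coroot, real_inner_smul_right, real_inner_comm α γ]
  have hmpos : 0 < m := by
    have : (0 : ℝ) < m := by rw [hm']; positivity
    exact_mod_cast this
  have hnpos : (0 : ℝ) < n := by rw [hn']; positivity
  set γ' := γ - (n : ℝ) • α with hγ'
  have hγ'Φ : γ' ∈ S.Φ := by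
    have := S.refl_mem α hαΦ γ hγΦ
    rwa [aux_reflV_apply, hn] at this
  have hγ'I : γ' ∈ PhiI S I := by
    refine ⟨hγ'Φ, ?_⟩
    refine Submodule.sub_mem _ hγI ?_
    rw [Int.cast_smul_eq_zsmul]
    exact Submodule.smul_mem _ _ (Submodule.subset_span hαI)
  have hγ'p : γ' ∈ S.pos := by
    rcases S.mem_pos_or γ' hγ'Φ with h | h
    · exact h
    exfalso
    obtain ⟨d, hd0, hd⟩ := S.simple_gen _ h
    have hz : ∀ δ ∈ S.Δ, δ ≠ α → c δ = 0 := by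
      intro δ hδ hδα
      obtain ⟨e, he⟩ := hcoord δ hδ
      have h1 : e γ = c δ := by rw [hc]; exact hsum c δ hδ e he
      have h2 : e (-γ') = d δ := by rw [hd]; exact hsum d δ hδ e he
      have h3 : e α = 0 := by rw [he α hαΔ, if_neg (Ne.symm hδα)]
      have h4 : e (-γ') = - e γ := by simp [hγ', h3]
      have := hc0 δ hδ
      have := hd0 δ hδ
      linarith
    have hγα : γ = c α • α := by
      rw [hc, Finset.sum_eq_single α]
      · intro b hb hbne
        rw [hz b hb hbne, zero_smul]
      · exact fun h => absurd hαΔ h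
    rcases S.reduced α hαΦ (c α) (hγα ▸ hγΦ) with h | h
    · rw [h, one_smul] at hγα
      exact hne hγα
    · have := hc0 α hαΔ
      linarith
  have hlt : f γ' < f γ := by
    rw [hγ', map_sub, map_smul, hf α hαΔ]
    simp only [smul_eq_mul]
    linarith
  have hgood : IsPosInt (l (coroot γ')) := by
    by_contra h
    have := hmin γ' (Finset.mem_filter.2 ⟨hγ'p, hγ'I, h⟩)
    linarith
  have hnorm : ⟪γ', γ'⟫ = ⟪γ, γ⟫ := by
    rw [hγ', inner_sub_left, inner_sub_right, inner_sub_right, real_inner_smul_left,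
      real_inner_smul_left, real_inner_smul_right, real_inner_smul_right,
      real_inner_comm γ α, hn']
    field_simp
    ring
  have hco : coroot γ = coroot γ' + (m : ℝ) • coroot α := by
    have e : 2 / ⟪γ, γ⟫ * (n : ℝ) = (m : ℝ) * (2 / ⟪α, α⟫) := by
      rw [hn', hm']; ring
    unfold coroot
    rw [hnorm, hγ', smul_sub, smul_smul, smul_smul, e]
    abel
  apply hγn
  obtain ⟨a, ha, ha'⟩ := hgood
  obtain ⟨b, hb, hb'⟩ := hl α hαI
  refine ⟨a + m * b, by positivity, ?_⟩
  rw [hco, map_add, map_smul, ha', hb']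
  simp

lemma aux_PhiI_sub (S : RootSys V) (I : Finset V) (hI : I ⊆ S.Δ) (l : HStar V)
    (hl : l ∈ LambdaP (I : Set V)) : PhiI S I ⊆ integralSet S l := by
  intro γ hγ
  refine ⟨hγ.1, ?_⟩
  rcases S.mem_pos_or γ hγ.1 with h | h
  · obtain ⟨n, _, hn⟩ := aux_posInt S I hI l hl γ hγ h
    exact ⟨n, hn⟩
  · obtain ⟨n, _, hn⟩ := aux_posInt S I hI l hl (-γ)
      ⟨S.pos_subset h, Submodule.neg_mem _ hγ.2⟩ h
    refine ⟨-n, ?_⟩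
    rw [aux_coroot_neg, map_neg] at hn
    push_cast
    rw [← hn, neg_neg]

lemma aux_coroot_mem (U : Submodule ℝ V) {α : V} (h : α ∈ U) : coroot α ∈ U :=
  U.smul_mem _ h

lemma aux_emb_mem (P : Set V) {a : V} (ha : a ∈ Submodule.span ℝ P) :
    emb a ∈ Submodule.span ℂ (emb '' P) := by
  refine Submodule.span_induction (p := fun x _ => emb x ∈ Submodule.span ℂ (emb '' P))
    ?_ ?_ ?_ ?_ ha
  · intro x hx
    exact Submodule.subset_span ⟨x, hx, rfl⟩
  · have : emb (0 : V) = 0 := by ext v; simp [emb]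
    rw [this]; exact Submodule.zero_mem _
  · intro x y _ _ hx hy
    have : emb (x + y) = emb x + emb y := by ext v; simp [emb, inner_add_left]
    rw [this]; exact Submodule.add_mem _ hx hy
  · intro r x _ hx
    have : emb (r • x) = (r : ℂ) • emb x := by ext v; simp [emb, real_inner_smul_left]
    rw [this]; exact Submodule.smul_mem _ _ hx

lemma aux_exists (P : Set V) (l : HStar V) :
    ∃ m : HStar V, m ∈ Submodule.span ℂ (emb '' P) ∧ ∀ α ∈ P, m (coroot α) = l (coroot α) := by
  let U := Submodule.span ℝ P
  have key : ∀ g : V →ₗ[ℝ] ℝ, ∃ a ∈ U, ∀ v ∈ U, ⟪a, v⟫ = g v := by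
    intro g
    let b := (InnerProductSpace.toDual ℝ V).symm (LinearMap.toContinuousLinearMap g)
    refine ⟨U.starProjection b, Submodule.starProjection_apply_mem _ _, fun v hv => ?_⟩
    rw [Submodule.inner_starProjection_left_eq_right,
      Submodule.starProjection_eq_self_iff.2 hv]
    simp [b, InnerProductSpace.toDual_symm_apply]
  obtain ⟨a, haU, ha⟩ := key (Complex.reLm ∘ₗ l)
  obtain ⟨b, hbU, hb⟩ := key (Complex.imLm ∘ₗ l)
  refine ⟨emb a + Complex.I • emb b, Submodule.add_mem _ (aux_emb_mem P haU)
    (Submodule.smul_mem _ _ (aux_emb_mem P hbU)), fun α hα => ?_⟩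
  have hc : coroot α ∈ U := aux_coroot_mem U (Submodule.subset_span hα)
  have h1 := ha _ hc
  have h2 := hb _ hc
  apply Complex.ext
  · simpa [emb] using h1
  · simpa [emb] using h2

lemma aux_restrict_spec (P : Set V) (l : HStar V) :
    restrictW P l ∈ Submodule.span ℂ (emb '' P) ∧
      ∀ α ∈ P, restrictW P l (coroot α) = l (coroot α) :=
  Classical.epsilon_spec (aux_exists P l)

lemma aux_restrict_eq (P : Set V) (l : HStar V) {v : V} (hv : v ∈ Submodule.span ℝ P) :
    restrictW P l v = l v := by
  have h := (aux_restrict_spec P l).2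
  refine Submodule.span_induction (p := fun x _ => restrictW P l x = l x)
    ?_ (by simp) ?_ ?_ hv
  · intro x hx
    by_cases h0 : x = 0
    · simp [h0]
    have hpos : ⟪x, x⟫ ≠ 0 := (real_inner_self_pos.2 h0).ne'
    have : x = (⟪x, x⟫ / 2) • coroot x := by
      rw [coroot, smul_smul]
      field_simp
      simp
    rw [this, map_smul, map_smul, h x hx]
  · intro x y _ _ hx hy
    simp only [map_add, hx, hy]
  · intro a x _ hx
    simp only [map_smul, hx]

lemma aux_span_perp (P : Set V) {m : HStar V} (hm : m ∈ Submodule.span ℂ (emb '' P))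
    {v : V} (hv : v ∈ (Submodule.span ℝ P)ᗮ) : m v = 0 := by
  refine Submodule.span_induction (p := fun (x : HStar V) _ => x v = 0) ?_ (by simp) ?_ ?_ hm
  · rintro _ ⟨x, hx, rfl⟩
    have := (Submodule.mem_orthogonal _ _).1 hv x (Submodule.subset_span hx)
    simp [emb, this]
  · intro x y _ _ hx hy
    simp [hx, hy]
  · intro a x _ hx
    simp [hx]

lemma aux_ext (U : Submodule ℝ V) {l m : HStar V} (h1 : ∀ v ∈ U, l v = m v)
    (h2 : ∀ v ∈ Uᗮ, l v = m v) : l = m := by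
  ext v
  obtain ⟨y, hy, z, hz, rfl⟩ := U.exists_add_mem_mem_orthogonal v
  rw [map_add, map_add, h1 y hy, h2 z hz]

lemma aux_weyl (Q : Set V) (U : Submodule ℝ V) (hQ : Q ⊆ U) {w : V ≃ₗ[ℝ] V}
    (hw : w ∈ weyl Q) : (∀ v, w v - v ∈ U) ∧ ∀ v ∈ Uᗮ, w v = v := by
  refine Subgroup.closure_induction
    (p := fun w _ => (∀ v, w v - v ∈ U) ∧ ∀ v ∈ Uᗮ, w v = v) ?_ ?_ ?_ ?_ hw
  · rintro _ ⟨α, hα, rfl⟩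
    constructor
    · intro v
      rw [aux_reflV_apply, sub_sub_cancel_left]
      exact U.neg_mem (U.smul_mem _ (hQ hα))
    · intro v hv
      have := (Submodule.mem_orthogonal' _ _).1 hv _ (aux_coroot_mem U (hQ hα))
      rw [aux_reflV_apply, this]
      simp
  · simp
  · rintro x y _ _ ⟨hx, hx'⟩ ⟨hy, hy'⟩
    constructor
    · intro v
      have := U.add_mem (hx (y v)) (hy v)
      simpa using this
    · intro v hv
      rw [LinearEquiv.mul_apply, hy' v hv, hx' v hv]
  · rintro x _ ⟨hx, hx'⟩
    have hi : ∀ v, x (x⁻¹ v) = v := fun v => x.apply_symm_apply v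
    constructor
    · intro v
      have := U.neg_mem (hx (x⁻¹ v))
      rwa [hi, neg_sub] at this
    · intro v hv
      apply x.injective
      rw [hi, hx' v hv]

/-- The action of `w` transports agreement on `U` and fixes values on the complement. -/
lemma aux_wAct (Q : Set V) (U : Submodule ℝ V) (hQ : Q ⊆ U) {w : V ≃ₗ[ℝ] V}
    (hw : w ∈ weyl Q) :
    (∀ v ∈ U, w.symm v ∈ U) ∧ ∀ (l : HStar V), ∀ v ∈ Uᗮ, wAct w l v = l v := by
  have hw' : w.symm ∈ weyl Q := (weyl Q).inv_mem hw
  obtain ⟨h1, h2⟩ := aux_weyl Q U hQ hw'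
  constructor
  · intro v hv
    have := U.add_mem (h1 v) hv
    simpa using this
  · intro l v hv
    simp [wAct, h2 v hv]

lemma aux_sRefl_agree (U : Submodule ℝ V) {β : V} (hβ : β ∈ U) {l m : HStar V}
    (h : ∀ v ∈ U, l v = m v) : ∀ v ∈ U, sRefl β l v = sRefl β m v := by
  intro v hv
  simp [sRefl, h v hv, h _ (aux_coroot_mem U hβ)]

lemma aux_sRefl_perp (U : Submodule ℝ V) {β : V} (hβ : β ∈ U) (l : HStar V) :
    ∀ v ∈ Uᗮ, sRefl β l v = l v := by
  intro v hv
  have := (Submodule.mem_orthogonal _ _).1 hv β hβ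
  simp [sRefl, emb, this]

lemma aux_regular (Q : Set V) (U : Submodule ℝ V) (hQ : Q ⊆ U) {l m : HStar V}
    (h : ∀ v ∈ U, l v = m v) : IsRegularOn Q l ↔ IsRegularOn Q m := by
  unfold IsRegularOn
  refine forall₂_congr fun α hα => ?_
  rw [h α (hQ hα)]

/-- Two pairs of weights agreeing on `U` and constant on the complement have the same sign. -/
lemma aux_sgn (S : RootSys V) (Q : Set V) (U : Submodule ℝ V) (hQ : Q ⊆ U)
    {l m l' m' : HStar V} (hl : ∀ v ∈ U, l v = l' v) (hm : ∀ v ∈ U, m v = m' v)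
    (h1 : ∀ v ∈ Uᗮ, l v = m v) (h2 : ∀ v ∈ Uᗮ, l' v = m' v) :
    sgnW S Q l m = sgnW S Q l' m' := by
  have key : ∀ w, (w ∈ weyl Q ∧ m = wAct w l) ↔ (w ∈ weyl Q ∧ m' = wAct w l') := by
    intro w
    refine and_congr_right fun hw => ?_
    obtain ⟨a, b⟩ := aux_wAct Q U hQ hw
    constructor
    · rintro h
      refine aux_ext U ?_ ?_
      · intro v hv
        rw [← hm v hv, h]
        exact hl _ (a v hv)
      · intro v hv
        rw [b _ v hv, h2 v hv]
    · rintro h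
      refine aux_ext U ?_ ?_
      · intro v hv
        rw [hm v hv, h]
        exact (hl _ (a v hv)).symm
      · intro v hv
        rw [b _ v hv, h1 v hv]
  have key' : (fun w => w ∈ weyl Q ∧ m = wAct w l) = (fun w => w ∈ weyl Q ∧ m' = wAct w l') :=
    funext fun w => propext (key w)
  have r1 := aux_regular Q U hQ hl
  have r2 := aux_regular Q U hQ hm
  unfold sgnW
  by_cases h : IsRegularOn Q l ∧ IsRegularOn Q m ∧ ∃ w, w ∈ weyl Q ∧ m = wAct w l
  · have h' : IsRegularOn Q l' ∧ IsRegularOn Q m' ∧ ∃ w, w ∈ weyl Q ∧ m' = wAct w l' :=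
      ⟨r1.1 h.1, r2.1 h.2.1, by obtain ⟨w, hw⟩ := h.2.2; exact ⟨w, (key w).1 hw⟩⟩
    rw [dif_pos h, dif_pos h']
    congr 2
    congr 1
  · have h' : ¬ (IsRegularOn Q l' ∧ IsRegularOn Q m' ∧ ∃ w, w ∈ weyl Q ∧ m' = wAct w l') := by
      rintro ⟨x, y, w, hw⟩
      exact h ⟨r1.2 x, r2.2 y, w, (key w).2 hw⟩
    rw [dif_neg h, dif_neg h']

lemma aux_sgn_ne (S : RootSys V) (Q : Set V) (l m : HStar V) :
    sgnW S Q l m ≠ 0 ↔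
      (IsRegularOn Q l ∧ IsRegularOn Q m ∧ ∃ w, w ∈ weyl Q ∧ m = wAct w l) := by
  unfold sgnW
  split_ifs with h
  · exact ⟨fun _ => h, fun _ => pow_ne_zero _ (by norm_num)⟩
  · exact ⟨fun h' => absurd rfl h', fun h' => absurd h' h⟩

lemma aux_second (S : RootSys V) (I : Finset V) (hI : I ⊆ S.Δ)
    (lam : HStar V) (hlam : lam ∈ LambdaP (I : Set V))
    (β : V) (hβ : β ∈ PsiP S (PhiI S I) (S.Φ : Set V) lam)
    (mu : HStar V) (hmu : mu ∈ LambdaP (I : Set V))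
    (hs : sgnW S (PhiI S I) (sRefl β lam) mu ≠ 0) :
      restrictW (integralSet S lam) mu ∈ LambdaPSub S (PhiI S I) (integralSet S lam) ∧
      sgnW S (PhiI S I) (sRefl β (restrictW (integralSet S lam) lam))
        (restrictW (integralSet S lam) mu) ≠ 0 ∧
      jc S (PhiI S I) (S.Φ : Set V) lam mu =
        jc S (PhiI S I) (integralSet S lam) (restrictW (integralSet S lam) lam)
          (restrictW (integralSet S lam) mu) := by
  have hsub := aux_PhiI_sub S I hI lam hlam
  set P := integralSet S lam with hP
  set U := Submodule.span ℝ P with hU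
  have hPU : P ⊆ U := Submodule.subset_span
  have hQ : PhiI S I ⊆ U := hsub.trans hPU
  have hint : ∀ γ ∈ PsiP S (PhiI S I) (S.Φ : Set V) lam, γ ∈ P := by
    rintro γ ⟨⟨h1, _⟩, _, n, _, hn⟩
    exact ⟨h1, n, hn⟩
  have eqU : ∀ (l : HStar V), ∀ v ∈ U, l v = restrictW P l v :=
    fun l v hv => (aux_restrict_eq P l hv).symm
  have perp : ∀ (l : HStar V), ∀ v ∈ Uᗮ, restrictW P l v = 0 :=
    fun l v hv => aux_span_perp P (aux_restrict_spec P l).1 hv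
  have hmuperp : ∀ v ∈ Uᗮ, lam v = mu v := by
    obtain ⟨_, _, w, hw, rfl⟩ := (aux_sgn_ne _ _ _ _).1 hs
    intro v hv
    rw [(aux_wAct _ U hQ hw).2 _ v hv, aux_sRefl_perp U (hPU (hint β hβ)) _ v hv]
  have hsgn : ∀ γ ∈ P, sgnW S (PhiI S I) (sRefl γ lam) mu =
      sgnW S (PhiI S I) (sRefl γ (restrictW P lam)) (restrictW P mu) := by
    intro γ hγ
    refine aux_sgn S _ U hQ (aux_sRefl_agree U (hPU hγ) (eqU lam)) (eqU mu) ?_ ?_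
    · intro v hv
      rw [aux_sRefl_perp U (hPU hγ) _ v hv, hmuperp v hv]
    · intro v hv
      rw [aux_sRefl_perp U (hPU hγ) _ v hv, perp _ v hv, perp _ v hv]
  refine ⟨⟨(aux_restrict_spec P mu).1, ?_⟩, ?_, ?_⟩
  · rintro α ⟨hα, hαp⟩
    rw [(aux_restrict_spec P mu).2 α (hsub hα)]
    exact aux_posInt S I hI mu hmu α hα hαp
  · rw [← hsgn β (hint β hβ)]
    exact hs
  · have hPsi : PsiPP S (PhiI S I) (S.Φ : Set V) lam =
        PsiPP S (PhiI S I) P (restrictW P lam) := by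
      ext γ
      constructor
      · rintro ⟨h, hr⟩
        have hγ := hint γ h
        refine ⟨⟨⟨hγ, h.1.2⟩, h.2.1, ?_⟩, fun α hα => ?_⟩
        · rw [(aux_restrict_spec P lam).2 γ hγ]
          exact h.2.2
        · rw [← aux_sRefl_agree U (hPU hγ) (eqU lam) α (hQ hα)]
          exact hr α hα
      · rintro ⟨⟨⟨hγ, hp⟩, hn, hpi⟩, hr⟩
        refine ⟨⟨⟨hγ.1, hp⟩, hn, ?_⟩, fun α hα => ?_⟩
        · rwa [(aux_restrict_spec P lam).2 γ hγ] at hpi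
        · rw [aux_sRefl_agree U (hPU hγ) (eqU lam) α (hQ hα)]
          exact hr α hα
    unfold jc
    exact finsum_mem_congr hPsi fun γ hγ => hsgn γ hγ.1.1.1

lemma aux_first (S : RootSys V) (I : Finset V) (hI : I ⊆ S.Δ)
    (lam : HStar V) (hlam : lam ∈ LambdaP (I : Set V))
    (β : V) (hβ : β ∈ PsiP S (PhiI S I) (S.Φ : Set V) lam)
    (mu' : HStar V) (hmu' : mu' ∈ LambdaPSub S (PhiI S I) (integralSet S lam))
    (hs : sgnW S (PhiI S I) (sRefl β (restrictW (integralSet S lam) lam)) mu' ≠ 0) :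
    ∃ mu ∈ LambdaP (I : Set V), sgnW S (PhiI S I) (sRefl β lam) mu ≠ 0 := by
  have hsub := aux_PhiI_sub S I hI lam hlam
  set P := integralSet S lam with hP
  set U := Submodule.span ℝ P with hU
  have hPU : P ⊆ U := Submodule.subset_span
  have hQ : PhiI S I ⊆ U := hsub.trans hPU
  have hβP : β ∈ P := by
    obtain ⟨⟨h1, _⟩, _, n, _, hn⟩ := hβ
    exact ⟨h1, n, hn⟩
  have eqU : ∀ v ∈ U, lam v = restrictW P lam v :=
    fun v hv => (aux_restrict_eq P lam hv).symm
  have eqU' := aux_sRefl_agree U (hPU hβP) eqU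
  obtain ⟨r1, r2, w, hw, hmw⟩ := (aux_sgn_ne _ _ _ _).1 hs
  have agree : ∀ v ∈ U, wAct w (sRefl β lam) v = mu' v := by
    intro v hv
    rw [hmw]
    exact eqU' _ ((aux_wAct _ U hQ hw).1 v hv)
  refine ⟨wAct w (sRefl β lam), ?_, (aux_sgn_ne _ _ _ _).2 ⟨?_, ?_, w, hw, rfl⟩⟩
  · intro α hα
    have hαp : α ∈ S.pos := S.simple_subset (hI hα)
    have hαI : α ∈ PhiI S I := ⟨S.pos_subset hαp, Submodule.subset_span hα⟩
    rw [agree _ (aux_coroot_mem U (hQ hαI))]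
    exact hmu'.2 α ⟨hαI, hαp⟩
  · exact (aux_regular _ U hQ eqU').2 r1
  · exact (aux_regular _ U hQ agree).2 r2

end Aux

/-- Lemma 4.6 (Integral invariance): for `λ ∈ Λ_I⁺` and `β ∈ Ψ_λ⁺`, there is
`μ ∈ Λ_I⁺` with `sgn(s_β λ, μ) ≠ 0` iff there is `μ' ∈ Λ⁺(Φ_I, Φ_{[λ]})` with
`sgn(s_β (λ|_{Φ_{[λ]}}), μ', Φ_I, Φ_{[λ]}) ≠ 0`; and if `sgn(s_β λ, μ) ≠ 0` then
`μ' = μ|_{Φ_{[λ]}}` works and `c(λ, μ) = c(λ|_{Φ_{[λ]}}, μ|_{Φ_{[λ]}}, Φ_I, Φ_{[λ]})`. -/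
theorem statement_5 {V : Type*} [NormedAddCommGroup V] [InnerProductSpace ℝ V]
    [FiniteDimensional ℝ V]
    (S : RootSys V) (I : Finset V) (hI : I ⊆ S.Δ)
    (lam : HStar V) (hlam : lam ∈ LambdaP (I : Set V))
    (β : V) (hβ : β ∈ PsiP S (PhiI S I) (S.Φ : Set V) lam) :
    ((∃ mu ∈ LambdaP (I : Set V), sgnW S (PhiI S I) (sRefl β lam) mu ≠ 0) ↔
      (∃ mu' ∈ LambdaPSub S (PhiI S I) (integralSet S lam),
        sgnW S (PhiI S I) (sRefl β (restrictW (integralSet S lam) lam)) mu' ≠ 0)) ∧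
    (∀ mu ∈ LambdaP (I : Set V), sgnW S (PhiI S I) (sRefl β lam) mu ≠ 0 →
      restrictW (integralSet S lam) mu ∈ LambdaPSub S (PhiI S I) (integralSet S lam) ∧
      sgnW S (PhiI S I) (sRefl β (restrictW (integralSet S lam) lam))
        (restrictW (integralSet S lam) mu) ≠ 0 ∧
      jc S (PhiI S I) (S.Φ : Set V) lam mu =
        jc S (PhiI S I) (integralSet S lam) (restrictW (integralSet S lam) lam)
          (restrictW (integralSet S lam) mu)) := by
  refine ⟨⟨?_, ?_⟩, ?_⟩
  · rintro ⟨mu, hmu, hs⟩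
    have h := aux_second S I hI lam hlam β hβ mu hmu hs
    exact ⟨_, h.1, h.2.1⟩
  · rintro ⟨mu', hmu', hs⟩
    exact aux_first S I hI lam hlam β hβ mu' hmu' hs
  · intro mu hmu hs
    exact aux_second S I hI lam hlam β hβ mu hmu hs

end JantzenGVM
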